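/- arXiv:2603.21347 — 4 statements merged into one kernel-verified Lean document; each statement's English description precedes it below -/
import Mathlib

section
/- Let S be a nonempty compact Hausdorff topological semigroup, i.e., a nonempty compact Hausdorff space equipped with an associative multiplication that is jointly continuous. Then there exists an idempotent e ∈ S (e·e = e) such that the set eSe = {e·s·e | s ∈ S} is a group under the semigroup multiplication with identity element e; in particular, for every x ∈ eSe there exists y ∈ eSe with x·y = e and y·x = e. -/
/-!
By compactness there is a minimal nonempty closed left ideal `I`. Since `S x` is closed, being the
image of `S` under the continuous map `y ↦ y * x`, `I` is minimal among all nonempty left ideals;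
hence `S x = I` for every `x ∈ I`. Being a compact subsemigroup, `I` contains an idempotent `e`.
Any `x ∈ eSe` lies in `I`, so `e ∈ S x`, which gives `x` a left inverse in `eSe`; a monoid in which
every element has a left inverse is a group.
-/

theorem isClosed_nonempty_sInf_of_isChain {R M : Type*} [SMul R M] [TopologicalSpace M]
    [CompactSpace M] {c : Set (SubMulAction R M)} (hne : c.Nonempty) (hchain : IsChain (· ≥ ·) c)
    (hc : ∀ p ∈ c, IsClosed (p : Set M) ∧ (p : Set M).Nonempty) :
    IsClosed ((sInf c : SubMulAction R M) : Set M) ∧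
      ((sInf c : SubMulAction R M) : Set M).Nonempty := by
  have : Nonempty c := hne.to_subtype
  have hdirected : Directed (· ⊇ ·) fun p : c => ((p : SubMulAction R M) : Set M) :=
    hchain.directedOn.directed_val
  have hcoe : ((sInf c : SubMulAction R M) : Set M) = ⋂ p : c, ((p : SubMulAction R M) : Set M) :=
    Set.biInter_eq_iInter c fun p _ => (p : Set M)
  rw [hcoe]
  exact ⟨isClosed_iInter fun p => (hc p p.2).1,
    IsCompact.nonempty_iInter_of_directed_nonempty_isCompact_isClosed _ hdirected
      (fun p => (hc p p.2).2) (fun p => (hc p p.2).1.isCompact) (fun p => (hc p p.2).1)⟩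

theorem exists_minimal_isClosed_nonempty_subMulAction (R M : Type*) [SMul R M]
    [TopologicalSpace M] [CompactSpace M] [Nonempty M] :
    ∃ p : SubMulAction R M,
      Minimal (fun q : SubMulAction R M => IsClosed (q : Set M) ∧ (q : Set M).Nonempty) p := by
  obtain ⟨p, -, hp⟩ := zorn_le_nonempty₀ (α := (SubMulAction R M)ᵒᵈ)
    {q : SubMulAction R M | IsClosed (q : Set M) ∧ (q : Set M).Nonempty}
    (fun c hc hchain q hq => ⟨sInf (α := SubMulAction R M) c,
      isClosed_nonempty_sInf_of_isChain ⟨q, hq⟩ hchain hc,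
      fun r hr => sInf_le (α := SubMulAction R M) hr⟩)
    (⊤ : SubMulAction R M) ⟨isClosed_univ, Set.univ_nonempty⟩
  exact ⟨p, hp⟩

section Semigroup

variable {S : Type*} [Semigroup S]

/-- The left ideal `S x`, which equals any minimal left ideal containing `x`. In the absence of a
unit it need not contain `x`, so it can be smaller than `SemigroupIdeal.closure {x}`. -/
def leftMultiples (x : S) : SemigroupIdeal S where
  carrier := Set.range (· * x)
  smul_mem' := by
    rintro s _ ⟨t, rfl⟩
    exact ⟨s * t, mul_assoc s t x⟩

theorem leftMultiples_le {I : SemigroupIdeal S} {x : S} (hx : x ∈ I) : leftMultiples x ≤ I := by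
  rintro _ ⟨s, rfl⟩
  exact I.mul_mem s hx

theorem leftMultiples_nonempty (x : S) : (leftMultiples x : Set S).Nonempty :=
  ⟨x * x, x, rfl⟩

/-- A minimal left ideal of a semigroup; the corner of each of its idempotents is a group. As a
`SemigroupIdeal` may be empty, minimality is among the nonempty ones. -/
def IsMinimalLeftIdeal (I : SemigroupIdeal S) : Prop :=
  Minimal (fun J : SemigroupIdeal S => (J : Set S).Nonempty) I

namespace IsMinimalLeftIdeal

variable {I : SemigroupIdeal S} {e x y : S}

theorem exists_mul_eq (hI : IsMinimalLeftIdeal I) (hx : x ∈ I) (hy : y ∈ I) : ∃ s, s * x = y :=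
  hI.le_of_le (leftMultiples_nonempty x) (leftMultiples_le hx) hy

theorem exists_mem_corner_mul_eq (hI : IsMinimalLeftIdeal I) (heI : e ∈ I)
    (he : IsIdempotentElem e) (hx : x ∈ Subsemigroup.corner e) :
    ∃ y ∈ Subsemigroup.corner e, y * x = e := by
  obtain ⟨hex, hxe⟩ := (Subsemigroup.mem_corner_iff he).mp hx
  have hxI : x ∈ I := hxe ▸ I.mul_mem x heI
  obtain ⟨s, hs⟩ := hI.exists_mul_eq hxI heI
  refine ⟨e * s * e, ⟨s, rfl⟩, ?_⟩
  calc
    e * s * e * x = e * (s * (e * x)) := by simp only [mul_assoc]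
    _ = e := by rw [hex, hs, he.eq]

/-- The group structure, with identity `e`, on the corner `eSe` of an idempotent `e` in a minimal
left ideal; its multiplication is that of the subsemigroup `Subsemigroup.corner e`. -/
noncomputable abbrev cornerGroup (hI : IsMinimalLeftIdeal I) (heI : e ∈ I)
    (he : IsIdempotentElem e) : Group (Subsemigroup.corner e) :=
  have hinv (x : Subsemigroup.corner e) : ∃ y : Subsemigroup.corner e, (y * x : S) = e :=
    let ⟨y, hy, hyx⟩ := hI.exists_mem_corner_mul_eq heI he x.2
    ⟨⟨y, hy⟩, hyx⟩
  letI : One (Subsemigroup.corner e) := ⟨⟨e, (Subsemigroup.mem_corner_iff he).mpr ⟨he, he⟩⟩⟩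
  letI : Inv (Subsemigroup.corner e) := ⟨fun x => (hinv x).choose⟩
  Group.ofLeftAxioms mul_assoc
    (fun x => Subtype.ext ((Subsemigroup.mem_corner_iff he).mp x.2).1)
    (fun x => Subtype.ext (hinv x).choose_spec)

end IsMinimalLeftIdeal

variable [TopologicalSpace S] [CompactSpace S] [T2Space S]

theorem isClosed_leftMultiples {x : S} (hx : Continuous (· * x)) :
    IsClosed (leftMultiples x : Set S) :=
  (isCompact_range hx).isClosed

theorem exists_isMinimalLeftIdeal_isClosed [Nonempty S] (hcont : ∀ x : S, Continuous (· * x)) :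
    ∃ I : SemigroupIdeal S, IsMinimalLeftIdeal I ∧ IsClosed (I : Set S) := by
  obtain ⟨I, hI⟩ := exists_minimal_isClosed_nonempty_subMulAction S S
  refine ⟨I, ⟨hI.prop.2, fun J ⟨x, hxJ⟩ hJI => ?_⟩, hI.prop.1⟩
  have hIx : I ≤ leftMultiples x :=
    hI.le_of_le ⟨isClosed_leftMultiples (hcont x), leftMultiples_nonempty x⟩
      (leftMultiples_le (hJI hxJ))
  exact hIx.trans (leftMultiples_le hxJ)

theorem exists_isIdempotentElem_mem_isMinimalLeftIdeal [Nonempty S]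
    (hcont : ∀ x : S, Continuous (· * x)) :
    ∃ (I : SemigroupIdeal S) (e : S), IsMinimalLeftIdeal I ∧ e ∈ I ∧ IsIdempotentElem e := by
  obtain ⟨I, hI, hclosed⟩ := exists_isMinimalLeftIdeal_isClosed hcont
  obtain ⟨e, heI, he⟩ := exists_idempotent_in_compact_subsemigroup hcont I
    hI.prop hclosed.isCompact fun x _ _ hy => I.mul_mem x hy
  exact ⟨I, e, hI, heI, he⟩

end Semigroup

theorem setOf_exists_eq_mul_mul_eq_corner {S : Type*} [Semigroup S] (e : S) :
    {z : S | ∃ s : S, z = e * s * e} = Subsemigroup.corner e :=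
  Set.ext fun _ => exists_congr fun _ => eq_comm

theorem stmt2_general {S : Type*} [Semigroup S] [TopologicalSpace S] [CompactSpace S]
    [T2Space S] [Nonempty S] (hcont : ∀ x : S, Continuous (· * x)) :
    ∃ e : S, e * e = e ∧
      (∀ x ∈ {z : S | ∃ s : S, z = e * s * e},
        ∀ y ∈ {z : S | ∃ s : S, z = e * s * e},
          x * y ∈ {z : S | ∃ s : S, z = e * s * e}) ∧
      (∀ x ∈ {z : S | ∃ s : S, z = e * s * e}, e * x = x ∧ x * e = x) ∧
      ∀ x ∈ {z : S | ∃ s : S, z = e * s * e},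
        ∃ y ∈ {z : S | ∃ s : S, z = e * s * e}, x * y = e ∧ y * x = e := by
  obtain ⟨I, e, hI, heI, he⟩ := exists_isIdempotentElem_mem_isMinimalLeftIdeal hcont
  let := hI.cornerGroup heI he
  simp only [setOf_exists_eq_mul_mul_eq_corner, SetLike.mem_coe]
  refine ⟨e, he, fun x hx y hy => mul_mem hx hy,
    fun x => (Subsemigroup.mem_corner_iff he).mp, fun x hx => ?_⟩
  let g : Subsemigroup.corner e := ⟨x, hx⟩
  exact ⟨(g⁻¹ : Subsemigroup.corner e), g⁻¹.2, congrArg Subtype.val (mul_inv_cancel g),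
    congrArg Subtype.val (inv_mul_cancel g)⟩

/-- Every nonempty compact Hausdorff topological semigroup contains an
idempotent `e` such that the corner `eSe = {e*s*e | s ∈ S}` is a group under
the semigroup multiplication with identity `e`: it is closed under
multiplication, `e` is a two-sided identity on it, and every element of `eSe`
has a two-sided inverse in `eSe`. -/
theorem stmt2 {S : Type*} [Semigroup S] [TopologicalSpace S] [CompactSpace S]
    [T2Space S] [ContinuousMul S] [Nonempty S] :
    ∃ e : S, e * e = e ∧
      (∀ x ∈ {z : S | ∃ s : S, z = e * s * e},
        ∀ y ∈ {z : S | ∃ s : S, z = e * s * e},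
          x * y ∈ {z : S | ∃ s : S, z = e * s * e}) ∧
      (∀ x ∈ {z : S | ∃ s : S, z = e * s * e}, e * x = x ∧ x * e = x) ∧
      ∀ x ∈ {z : S | ∃ s : S, z = e * s * e},
        ∃ y ∈ {z : S | ∃ s : S, z = e * s * e}, x * y = e ∧ y * x = e :=
  stmt2_general continuous_mul_const
end

section
/- Let V and W be real vector spaces, let B : V × W → ℝ be a bilinear map, let u ∈ V, u' ∈ W, and let e₀, e₁ ∈ V and f₀, f₁ ∈ W. Suppose: (i) B(u, u') = 1; (ii) for all i, j ∈ {0,1}, each of B(eᵢ, fⱼ), B(u − eᵢ, fⱼ), B(eᵢ, u' − fⱼ), B(u − eᵢ, u' − fⱼ) is nonnegative; (iii) B(2eᵢ − u, 2fⱼ − u') = (−1)^{i·j} for all i, j ∈ {0,1}. Then B(eᵢ, u') = 1/2 and B(u, fⱼ) = 1/2 for all i, j ∈ {0,1}. -/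
/-!
When two binary observables are perfectly correlated, their two disagreement probabilities are
nonnegative with sum zero, so both vanish and the two biases coincide; relabelling one party's
outcomes, perfect anticorrelation makes the biases opposite. Going around the four setting pairs of
the CHSH game, whose signs multiply to `-1`, identifies a bias with its own negative, so it is `0`.
-/

section Frustration

variable {ι κ M : Type*}

/-- A sign matrix is frustrated if it contains a 2 × 2 submatrix whose entries multiply to `-1`;
equivalently, it is not of the form `s i j = a i * b j`. The signs `(-1) ^ (i * j)` of the CHSH game
are the smallest example. -/
def IsFrustrated (s : ι → κ → ℤˣ) : Prop :=
  ∃ i i' j j', s i j * s i j' ≠ s i' j * s i' j'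

theorem isFrustrated_chsh :
    IsFrustrated fun i j : Fin 2 ↦ (-1 : ℤˣ) ^ ((i : ℕ) * (j : ℕ)) :=
  ⟨0, 1, 0, 1, by decide⟩

theorem IsFrustrated.eq_zero_of_forall_eq_smul [AddCommGroup M] [IsAddTorsionFree M]
    {s : ι → κ → ℤˣ} (hs : IsFrustrated s) {α : ι → M} {β : κ → M}
    (h : ∀ i j, α i = s i j • β j) : α = 0 ∧ β = 0 := by
  obtain ⟨i₀, i₁, j, j', hne⟩ := hs
  have transport : ∀ i, β j = (s i j * s i j') • β j' := fun i ↦ by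
    rw [mul_smul, ← h i j', h i j, smul_smul, Int.units_mul_self, one_smul]
  have hneg : s i₀ j * s i₀ j' = -(s i₁ j * s i₁ j') := Int.units_ne_iff_eq_neg.mp hne
  have hβj : β j = 0 := by
    rw [← self_eq_neg]
    calc β j = (s i₀ j * s i₀ j') • β j' := transport i₀
      _ = -((s i₁ j * s i₁ j') • β j') := by rw [hneg, Units.neg_smul]
      _ = -β j := by rw [← transport i₁]
  have hα : ∀ i, α i = 0 := fun i ↦ by rw [h i j, hβj, smul_zero]
  have hβ : ∀ k, β k = 0 := fun k ↦ by rw [← smul_eq_zero_iff_eq (s i₀ k), ← h, hα]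
  exact ⟨funext hα, funext hβ⟩

end Frustration

section Correlation

variable {R V W M : Type*} [CommSemiring R] [AddCommGroup V] [Module R V]
  [AddCommGroup W] [Module R W] [AddCommGroup M] [Module R M]
  (B : V →ₗ[R] W →ₗ[R] M) (u : V) (u' : W) (e : V) (f : W)

theorem sub_correlator_eq_two_nsmul_disagreement :
    B u u' - B (2 • e - u) (2 • f - u') = 2 • (B e (u' - f) + B (u - e) f) := by
  simp only [map_sub, map_nsmul, LinearMap.sub_apply, LinearMap.smul_apply]
  abel

variable [PartialOrder M]

/-- Nonnegativity of the four joint outcome probabilities of the binary measurements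
`{e, u - e}` and `{f, u' - f}` in the bipartite state `B`. -/
def JointlyNonneg : Prop :=
  0 ≤ B e f ∧ 0 ≤ B (u - e) f ∧ 0 ≤ B e (u' - f) ∧ 0 ≤ B (u - e) (u' - f)

variable {B u u' e f}

theorem JointlyNonneg.compl_right (h : JointlyNonneg B u u' e f) :
    JointlyNonneg B u u' e (u' - f) := by
  obtain ⟨hef, hcf, hec, hcc⟩ := h
  exact ⟨hec, hcc, by rwa [sub_sub_cancel], by rwa [sub_sub_cancel]⟩

variable [IsOrderedAddMonoid M] [IsAddTorsionFree M]

theorem JointlyNonneg.bias_eq_of_correlator_eq (h : JointlyNonneg B u u' e f)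
    (hc : B (2 • e - u) (2 • f - u') = B u u') :
    B (2 • e - u) u' = B u (2 • f - u') := by
  have hsum : B e (u' - f) + B (u - e) f = 0 := by
    rw [← nsmul_eq_zero_iff_right two_ne_zero, ← sub_correlator_eq_two_nsmul_disagreement, hc,
      sub_self]
  obtain ⟨-, hcf_nonneg, hec_nonneg, -⟩ := h
  obtain ⟨hec, hcf⟩ := (add_eq_zero_iff_of_nonneg hec_nonneg hcf_nonneg).mp hsum
  have marginal_eq : B e u' = B u f :=
    calc B e u' = B e f := sub_eq_zero.mp (by rwa [map_sub] at hec)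
      _ = B u f := (sub_eq_zero.mp (by rwa [map_sub, LinearMap.sub_apply] at hcf)).symm
  simp only [map_sub, map_nsmul, LinearMap.sub_apply, LinearMap.smul_apply, marginal_eq]

theorem JointlyNonneg.bias_eq_smul_of_correlator_eq_smul (h : JointlyNonneg B u u' e f) {s : ℤˣ}
    (hc : B (2 • e - u) (2 • f - u') = s • B u u') :
    B (2 • e - u) u' = s • B u (2 • f - u') := by
  rcases Int.units_eq_one_or s with rfl | rfl
  · rw [one_smul] at hc ⊢
    exact h.bias_eq_of_correlator_eq hc
  · have observable_compl : 2 • (u' - f) - u' = -(2 • f - u') := by abel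
    rw [Units.neg_smul, one_smul] at hc ⊢
    rw [← map_neg, ← observable_compl]
    apply h.compl_right.bias_eq_of_correlator_eq
    rw [observable_compl, map_neg, hc, neg_neg]

theorem stmt4_general {ι κ : Type*} {e : ι → V} {f : κ → W} {s : ι → κ → ℤˣ}
    (hs : IsFrustrated s) (hB : ∀ i j, JointlyNonneg B u u' (e i) (f j))
    (hc : ∀ i j, B (2 • e i - u) (2 • f j - u') = s i j • B u u') :
    (∀ i, 2 • B (e i) u' = B u u') ∧ (∀ j, 2 • B u (f j) = B u u') := by
  obtain ⟨hα, hβ⟩ := hs.eq_zero_of_forall_eq_smul fun i j ↦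
    (hB i j).bias_eq_smul_of_correlator_eq_smul (hc i j)
  constructor
  · intro i
    simpa only [map_sub, map_nsmul, LinearMap.sub_apply, LinearMap.smul_apply, Pi.zero_apply,
      sub_eq_zero] using congrFun hα i
  · intro j
    simpa only [map_sub, map_nsmul, Pi.zero_apply, sub_eq_zero] using congrFun hβ j

end Correlation

/-- Any instance of the CHSH scenario achieving the algebraically maximal CHSH
value `4` (all correlators equal to `(-1)^{ij}`) automatically has uniform
marginals. -/
theorem stmt4 {V W : Type*} [AddCommGroup V] [Module ℝ V] [AddCommGroup W]
    [Module ℝ W] (B : V →ₗ[ℝ] W →ₗ[ℝ] ℝ) (u : V) (u' : W)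
    (e : Fin 2 → V) (f : Fin 2 → W)
    (h1 : B u u' = 1)
    (h2 : ∀ i j : Fin 2, 0 ≤ B (e i) (f j) ∧ 0 ≤ B (u - e i) (f j) ∧
      0 ≤ B (e i) (u' - f j) ∧ 0 ≤ B (u - e i) (u' - f j))
    (h3 : ∀ i j : Fin 2, B (2 • e i - u) (2 • f j - u') =
      (-1 : ℝ) ^ ((i : ℕ) * (j : ℕ))) :
    (∀ i : Fin 2, B (e i) u' = 1 / 2) ∧ (∀ j : Fin 2, B u (f j) = 1 / 2) := by
  simpa only [nsmul_eq_mul', Nat.cast_ofNat, h1, eq_div_iff (two_ne_zero' ℝ)] using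
    stmt4_general isFrustrated_chsh h2 fun i j ↦ by rw [h1, h3, Units.smul_def]; simp
end

section
/- Let n₁, n₂, n₃, n₄, n₅ be nonnegative integers satisfying: n₁ = 1; n₁ + n₂ + n₃ + n₄ + 2n₅ ≥ 3; n₁ + n₂ − n₃ − n₄ ≥ 0; n₁ + n₂ + n₃ + n₄ − 2n₅ ≥ 0; n₁ − n₂ + n₃ − n₄ ≥ 0; n₁ − n₂ − n₃ + n₄ ≥ 0. Then (n₂, n₃, n₄, n₅) is one of exactly the six tuples (1,0,0,1), (0,1,0,1), (0,0,1,1), (1,1,1,0), (1,1,1,1), (1,1,1,2); conversely each of these six tuples satisfies all the inequalities. -/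
/-!
Once `n₁ = 1`, the degree bound and nonnegativity at the central element `r²` squeeze `2 * n₅`
between `3 - (1 + n₂ + n₃ + n₄)` and `1 + n₂ + n₃ + n₄`, so `1 ≤ n₂ + n₃ + n₄`. On the other three
classes `χ₅` vanishes, and nonnegativity there says that any two of `n₂`, `n₃`, `n₄` sum to at most
one more than the third. Two of these inequalities together bound each multiplicity above by `1`;
comparing one of them with the total bounds each below by `0`, so a virtual character satisfying
the system is a genuine one. Two of `χ₂`, `χ₃`, `χ₄` cannot occur without the third, so exactly
one or all three of them occur, and the squeeze forces `n₅ = 1` or `0 ≤ n₅ ≤ 2` respectively.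
-/

/-- Nonnegativity of the virtual character `k χ₁ + a χ₂ + b χ₃ + c χ₄ + d χ₅` of `D₄` on the
noncentral conjugacy classes. Since `χ₅` vanishes there, `d` is not a parameter; negative terms are
moved across, so that the condition makes sense without subtraction. -/
structure NonnegOffCenter {α : Type*} [Add α] [LE α] (k a b c : α) : Prop where
  at_r : b + c ≤ k + a
  at_s : a + c ≤ k + b
  at_rs : a + b ≤ k + c

namespace NonnegOffCenter

section OrderedCancelAddCommMonoid

variable {α : Type*} [AddCommMonoid α] [LinearOrder α] [IsOrderedCancelAddMonoid α] {k a b c : α}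

theorem coeff_le (h : NonnegOffCenter k a b c) : a ≤ k := by
  rcases le_total b c with hbc | hcb
  · exact le_of_add_le_add_right (h.at_s.trans (by gcongr))
  · exact le_of_add_le_add_right (h.at_rs.trans (by gcongr))

theorem coeff_nonneg (h : NonnegOffCenter k a b c) (hsum : k ≤ a + b + c) : 0 ≤ a := by
  have hk : k + 0 ≤ k + 2 • a :=
    calc
      k + 0 ≤ a + (b + c) := by rwa [add_zero, ← add_assoc]
      _ ≤ a + (k + a) := add_le_add_right h.at_r a
      _ = k + 2 • a := by rw [add_left_comm, two_nsmul]
  exact (nsmul_nonneg_iff two_ne_zero).1 (le_of_add_le_add_left hk)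

end OrderedCancelAddCommMonoid

theorem rotate {α : Type*} [AddCommMagma α] [LE α] {k a b c : α} (h : NonnegOffCenter k a b c) :
    NonnegOffCenter k b c a where
  at_r := add_comm a c ▸ h.at_s
  at_s := add_comm a b ▸ h.at_rs
  at_rs := h.at_r

theorem coeff_eq_zero_or_one {a b c : ℤ} (h : NonnegOffCenter 1 a b c) (hsum : 1 ≤ a + b + c) :
    a = 0 ∨ a = 1 := by
  have hnonneg : 0 ≤ a := h.coeff_nonneg hsum
  have hle : a ≤ 1 := h.coeff_le
  interval_cases a <;> simp

theorem exactly_one_or_all {a b c : ℤ} (h : NonnegOffCenter 1 a b c) (hsum : 1 ≤ a + b + c) :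
    (a = 1 ∧ b = 0 ∧ c = 0) ∨ (a = 0 ∧ b = 1 ∧ c = 0) ∨ (a = 0 ∧ b = 0 ∧ c = 1) ∨
      (a = 1 ∧ b = 1 ∧ c = 1) := by
  have ha : a = 0 ∨ a = 1 := h.coeff_eq_zero_or_one hsum
  have hb : b = 0 ∨ b = 1 := h.rotate.coeff_eq_zero_or_one (by linarith)
  have hc : c = 0 ∨ c = 1 := h.rotate.rotate.coeff_eq_zero_or_one (by linarith)
  obtain ⟨hr, hs, hrs⟩ := h
  rcases ha with rfl | rfl <;> rcases hb with rfl | rfl <;> rcases hc with rfl | rfl <;> omega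

end NonnegOffCenter

theorem stmt6_general (n₁ n₂ n₃ n₄ n₅ : ℤ) (hn₁ : n₁ = 1) :
    (3 ≤ n₁ + n₂ + n₃ + n₄ + 2 * n₅ ∧
     0 ≤ n₁ + n₂ - n₃ - n₄ ∧
     0 ≤ n₁ + n₂ + n₃ + n₄ - 2 * n₅ ∧
     0 ≤ n₁ - n₂ + n₃ - n₄ ∧
     0 ≤ n₁ - n₂ - n₃ + n₄) ↔
    (n₂, n₃, n₄, n₅) ∈ ({(1, 0, 0, 1), (0, 1, 0, 1), (0, 0, 1, 1),
      (1, 1, 1, 0), (1, 1, 1, 1), (1, 1, 1, 2)} : Set (ℤ × ℤ × ℤ × ℤ)) := by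
  subst hn₁
  simp only [Set.mem_insert_iff, Set.mem_singleton_iff, Prod.mk.injEq]
  constructor
  · rintro ⟨hdeg, hr, hr2, hs, hrs⟩
    have hoff : NonnegOffCenter 1 n₂ n₃ n₄ := ⟨by linarith, by linarith, by linarith⟩
    have hsum : 1 ≤ n₂ + n₃ + n₄ := by omega
    rcases hoff.exactly_one_or_all hsum with
      ⟨rfl, rfl, rfl⟩ | ⟨rfl, rfl, rfl⟩ | ⟨rfl, rfl, rfl⟩ | ⟨rfl, rfl, rfl⟩
    · have hn₅ : n₅ = 1 := by omega
      simp [hn₅]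
    · have hn₅ : n₅ = 1 := by omega
      simp [hn₅]
    · have hn₅ : n₅ = 1 := by omega
      simp [hn₅]
    · have hn₅ : n₅ = 0 ∨ n₅ = 1 ∨ n₅ = 2 := by omega
      simpa using hn₅
  · rintro (⟨rfl, rfl, rfl, rfl⟩ | ⟨rfl, rfl, rfl, rfl⟩ | ⟨rfl, rfl, rfl, rfl⟩ |
      ⟨rfl, rfl, rfl, rfl⟩ | ⟨rfl, rfl, rfl, rfl⟩ | ⟨rfl, rfl, rfl, rfl⟩) <;> norm_num

/-- The Diophantine system coming from the character table of the dihedral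
group `D₄`: nonnegative integers `n₁, …, n₅` with `n₁ = 1` make the character
`Σᵢ nᵢ χᵢ` nonnegative on every conjugacy class with degree at least `3`
if and only if `(n₂, n₃, n₄, n₅)` is one of exactly six tuples. -/
theorem stmt6 (n₁ n₂ n₃ n₄ n₅ : ℤ) (h₁ : 0 ≤ n₁) (h₂ : 0 ≤ n₂) (h₃ : 0 ≤ n₃)
    (h₄ : 0 ≤ n₄) (h₅ : 0 ≤ n₅) (hn₁ : n₁ = 1) :
    (3 ≤ n₁ + n₂ + n₃ + n₄ + 2 * n₅ ∧
     0 ≤ n₁ + n₂ - n₃ - n₄ ∧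
     0 ≤ n₁ + n₂ + n₃ + n₄ - 2 * n₅ ∧
     0 ≤ n₁ - n₂ + n₃ - n₄ ∧
     0 ≤ n₁ - n₂ - n₃ + n₄) ↔
    (n₂, n₃, n₄, n₅) ∈ ({(1, 0, 0, 1), (0, 1, 0, 1), (0, 0, 1, 1),
      (1, 1, 1, 0), (1, 1, 1, 1), (1, 1, 1, 2)} : Set (ℤ × ℤ × ℤ × ℤ)) :=
  stmt6_general n₁ n₂ n₃ n₄ n₅ hn₁
end

section
/- Let n₀, n₁, n₂, n₃ be nonnegative integers with n₀ = 1 and n₀ + n₁ + n₂ + n₃ ≥ 3. Suppose that for every m ∈ {0,1,2,3} the complex number Σ_{k=0}^{3} n_k · i^{k·m} (where i is the imaginary unit) is a nonnegative real number. Then n₀ = n₁ = n₂ = n₃ = 1; conversely (1,1,1,1) satisfies all the conditions. -/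
/-!
The value of `∑ k, n k χ_k` at `1` is `(n 0 - n 2) + (n 1 - n 3) i` and its value at `2` is
`(n 0 + n 2) - (n 1 + n 3)`. Nonnegativity therefore gives `n 1 = n 3`, `n 2 ≤ n 0` and
`n 1 + n 3 ≤ n 0 + n 2`, so the degree is at most `2 (n 0 + n 2) ≤ 4 n 0`. For integers,
`n 2 < n 0` would force the degree down to `4 n 0 - 2`; hence a larger degree makes `n 2 = n 0`,
and then `n 1 = n 3 = n 0` because the degree `2 (n 0 + n 1)` is even.
-/

open scoped ComplexOrder

/-- The value at `m` of the combination `∑ k, a k χ_k` of the irreducible characters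
`χ_k(m) = i ^ (k m)` of `ℤ₄`. The argument `m` is a natural number representing a class mod `4`,
and the coefficients are complex, so that virtual characters are included. -/
def characterSum (a : Fin 4 → ℂ) (m : ℕ) : ℂ :=
  ∑ k : Fin 4, a k * Complex.I ^ ((k : ℕ) * m)

section Values

variable (a : Fin 4 → ℂ)

lemma characterSum_zero : characterSum a 0 = a 0 + a 1 + a 2 + a 3 := by
  simp [characterSum, Fin.sum_univ_four]

lemma characterSum_one :
    characterSum a 1 = (a 0 - a 2) + (a 1 - a 3) * Complex.I := by
  simp only [characterSum, Fin.sum_univ_four, Fin.coe_ofNat_eq_mod, Nat.reduceMod, Nat.reduceMul,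
    pow_zero, pow_one, Complex.I_sq, Complex.I_pow_three]
  ring

lemma characterSum_two : characterSum a 2 = (a 0 + a 2) - (a 1 + a 3) := by
  simp only [characterSum, Fin.sum_univ_four, mul_comm _ 2, pow_mul, Complex.I_sq,
    Fin.coe_ofNat_eq_mod, Nat.reduceMod]
  ring

lemma characterSum_three :
    characterSum a 3 = (a 0 - a 2) + (a 3 - a 1) * Complex.I := by
  simp only [characterSum, Fin.sum_univ_four, mul_comm _ 3, pow_mul, Complex.I_pow_three,
    Fin.coe_ofNat_eq_mod, Nat.reduceMod, pow_zero, pow_one, neg_sq, Odd.neg_pow (by decide : Odd 3),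
    Complex.I_sq]
  ring

end Values

lemma forall_characterSum_nonneg_iff (a : Fin 4 → ℝ) :
    (∀ m : Fin 4, 0 ≤ characterSum (fun k ↦ a k) m) ↔
      0 ≤ a 0 + a 1 + a 2 + a 3 ∧ a 1 = a 3 ∧ a 2 ≤ a 0 ∧ a 1 + a 3 ≤ a 0 + a 2 := by
  have at_zero : 0 ≤ characterSum (fun k ↦ a k) 0 ↔ 0 ≤ a 0 + a 1 + a 2 + a 3 := by
    rw [characterSum_zero]
    norm_cast
  have at_one : 0 ≤ characterSum (fun k ↦ a k) 1 ↔ a 2 ≤ a 0 ∧ a 1 = a 3 := by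
    simp [characterSum_one, Complex.nonneg_iff, eq_comm (a := (0 : ℝ)), sub_eq_zero]
  have at_two : 0 ≤ characterSum (fun k ↦ a k) 2 ↔ a 1 + a 3 ≤ a 0 + a 2 := by
    rw [characterSum_two, sub_nonneg]
    norm_cast
  have at_three : 0 ≤ characterSum (fun k ↦ a k) 3 ↔ a 2 ≤ a 0 ∧ a 3 = a 1 := by
    simp [characterSum_three, Complex.nonneg_iff, eq_comm (a := (0 : ℝ)), sub_eq_zero]
  simp only [Fin.forall_fin_succ, IsEmpty.forall_iff, Fin.coe_ofNat_eq_mod, Fin.val_succ,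
    Nat.reduceMod, Nat.reduceAdd, at_zero, at_one, at_two, at_three]
  tauto

lemma forall_characterSum_intCast_nonneg_iff (n : Fin 4 → ℤ) :
    (∀ m : Fin 4, 0 ≤ characterSum (fun k ↦ n k) m) ↔
      0 ≤ n 0 + n 1 + n 2 + n 3 ∧ n 1 = n 3 ∧ n 2 ≤ n 0 ∧ n 1 + n 3 ≤ n 0 + n 2 := by
  exact_mod_cast forall_characterSum_nonneg_iff (fun k ↦ (n k : ℝ))

lemma exists_nonneg_eq_ofReal_iff (z : ℂ) : (∃ r : ℝ, 0 ≤ r ∧ z = r) ↔ 0 ≤ z := by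
  simpa [eq_comm] using (RCLike.nonneg_iff_exists_ofReal (z := z)).symm

theorem stmt8_general {d : ℤ} (hd : 0 ≤ d) (n : Fin 4 → ℤ) :
    (n 0 = d ∧ 4 * d - 1 ≤ n 0 + n 1 + n 2 + n 3 ∧
      ∀ m : Fin 4, ∃ r : ℝ, 0 ≤ r ∧
        (∑ k : Fin 4, (n k : ℂ) * Complex.I ^ ((k : ℕ) * (m : ℕ))) = (r : ℂ)) ↔
    (∀ k : Fin 4, n k = d) := by
  simp only [exists_nonneg_eq_ofReal_iff]
  change (_ ∧ _ ∧ ∀ m : Fin 4, 0 ≤ characterSum (fun k ↦ n k) m) ↔ _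
  rw [forall_characterSum_intCast_nonneg_iff]
  constructor
  · rintro ⟨h0, h_degree, -, h13, h20, h_le⟩
    have h_degree_le : n 0 + n 1 + n 2 + n 3 ≤ 2 * (d + n 2) := by linarith
    have h_lt : d < n 2 + 1 := by linarith [h_degree.trans h_degree_le]
    have h2 : n 2 = d := le_antisymm (h0 ▸ h20) (Int.lt_add_one_iff.mp h_lt)
    have h1 : n 1 = d := by lia
    have h3 : n 3 = d := h13 ▸ h1
    simp [Fin.forall_fin_succ, h0, h1, h2, h3]
  · intro h
    simp only [h]
    lia

/-- The Diophantine system coming from the character table of the cyclic group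
`ℤ₄` (with characters `χ_k(m) = i^{km}`): nonnegative integers `n₀, …, n₃`
with `n₀ = 1`, total degree at least `3`, and `Σ_k n_k i^{km}` a nonnegative
real for every `m`, force `n₀ = n₁ = n₂ = n₃ = 1`; conversely `(1,1,1,1)`
satisfies all the conditions. -/
theorem stmt8 (n : Fin 4 → ℕ) :
    (n 0 = 1 ∧ 3 ≤ n 0 + n 1 + n 2 + n 3 ∧
      ∀ m : Fin 4, ∃ r : ℝ, 0 ≤ r ∧
        (∑ k : Fin 4, (n k : ℂ) * Complex.I ^ ((k : ℕ) * (m : ℕ))) = (r : ℂ)) ↔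
    (∀ k : Fin 4, n k = 1) := by
  zify
  simpa using stmt8_general zero_le_one (fun k ↦ (n k : ℤ))
end
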